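/- If a locally connected continuum X contained in the Euclidean plane ℝ² separates the plane between two points a and b (i.e., a and b lie in different connected components of ℝ² ∖ X), then X contains a simple closed curve S such that a and b lie in different connected components of ℝ² ∖ S. -/

import Mathlib

/-- A space has the fixed point property: every continuous self-map has a fixed point. -/
def HasFPP (Y : Type*) [TopologicalSpace Y] : Prop :=
  ∀ f : Y → Y, Continuous f → ∃ x, f x = x

/-- A space has the periodic point property: every continuous self-map has a periodic point. -/
def HasPPP (Y : Type*) [TopologicalSpace Y] : Prop :=
  ∀ f : Y → Y, Continuous f → ∃ x, ∃ n : ℕ, 1 ≤ n ∧ f^[n] x = x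

/-- Local fixed point property: there is an open basis whose members have closures with FPP. -/
def HasLFPP (Y : Type*) [TopologicalSpace Y] : Prop :=
  ∃ 𝓑 : Set (Set Y), TopologicalSpace.IsTopologicalBasis 𝓑 ∧
    ∀ B ∈ 𝓑, HasFPP ↥(closure B)

/-- Weak local fixed point property. -/
def HasWLFPP (Y : Type*) [TopologicalSpace Y] : Prop :=
  ∃ 𝓑 : Set (Set Y), TopologicalSpace.IsTopologicalBasis 𝓑 ∧
    ∀ B ∈ 𝓑, ∀ f : Y → Y, Continuous f → f '' closure B ⊆ B → ∃ x ∈ B, f x = x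

/-- Local periodic point property. -/
def HasLPPP (Y : Type*) [TopologicalSpace Y] : Prop :=
  ∃ 𝓑 : Set (Set Y), TopologicalSpace.IsTopologicalBasis 𝓑 ∧
    ∀ B ∈ 𝓑, HasPPP ↥(closure B)

/-- Weak local periodic point property. -/
def HasWLPPP (Y : Type*) [TopologicalSpace Y] : Prop :=
  ∃ 𝓑 : Set (Set Y), TopologicalSpace.IsTopologicalBasis 𝓑 ∧
    ∀ B ∈ 𝓑, ∀ f : Y → Y, Continuous f → f '' closure B ⊆ B →
      ∃ x ∈ B, ∃ n : ℕ, 1 ≤ n ∧ f^[n] x = x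

/-- A subset is a simple closed curve if it is homeomorphic to the unit circle. -/
def IsSimpleClosedCurve {α : Type*} [TopologicalSpace α] (S : Set α) : Prop :=
  Nonempty (↥S ≃ₜ ↥(Metric.sphere (0 : EuclideanSpace ℝ (Fin 2)) 1))

/-- Covering dimension at most `n`: every finite open cover admits an open shrinking
of order at most `n + 1`. -/
def CoveringDimLE (Y : Type*) [TopologicalSpace Y] (n : ℕ) : Prop :=
  ∀ (ι : Type) [Finite ι] (U : ι → Set Y), (∀ i, IsOpen (U i)) → (⋃ i, U i) = Set.univ →
    ∃ V : ι → Set Y, (∀ i, IsOpen (V i)) ∧ (∀ i, V i ⊆ U i) ∧ (⋃ i, V i) = Set.univ ∧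
      ∀ y : Y, {i | y ∈ V i}.ncard ≤ n + 1

/-- A dendrite: a locally connected (metric) continuum containing no simple closed curve. -/
def IsDendrite {α : Type*} [TopologicalSpace α] (D : Set α) : Prop :=
  IsCompact D ∧ IsConnected D ∧ LocallyConnectedSpace ↥D ∧ ∀ S ⊆ D, ¬ IsSimpleClosedCurve S

/-- A local dendrite: every point has a closed neighborhood which is a dendrite. -/
def IsLocalDendrite (Y : Type*) [TopologicalSpace Y] : Prop :=
  ∀ y : Y, ∃ N : Set Y, N ∈ nhds y ∧ IsClosed N ∧ IsDendrite N

/-!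
By Eilenberg's criterion, a compact set `S ⊆ ℂ` separates `a` from `b` if and only if
`(z - a) / (z - b)` has no continuous logarithm on `S`. On a locally path connected `X`, the lack of
a continuous logarithm means that some path in the graph of the multivalued logarithm joins two
different points over the same point of `X`. This path can be made injective. A shortest subpath
with both ends over one point then projects onto a simple closed curve, and a continuous logarithm
on that curve would differ from the subpath by a constant, so that the subpath would close up.
-/

open Set Filter Topology TopologicalSpace Metric unitInterval

/-! ### Continuous logarithms -/

/-- `f` has a continuous logarithm: it lifts through `Complex.exp : ℂ → ℂ`. -/
def HasContinuousLog {K : Type*} [TopologicalSpace K] (f : K → ℂ) : Prop :=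
  ∃ L : K → ℂ, Continuous L ∧ ∀ k, Complex.exp (L k) = f k

section ContinuousLog

variable {K K' : Type*} [TopologicalSpace K] [TopologicalSpace K'] {f : K → ℂ}

lemma HasContinuousLog.comp (hf : HasContinuousLog f) {φ : K' → K} (hφ : Continuous φ) :
    HasContinuousLog (f ∘ φ) := by
  obtain ⟨L, hL, hLf⟩ := hf
  exact ⟨L ∘ φ, hL.comp hφ, fun k => hLf (φ k)⟩

lemma HasContinuousLog.inv (hf : HasContinuousLog f) : HasContinuousLog fun k => (f k)⁻¹ := by
  obtain ⟨L, hL, hLf⟩ := hf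
  exact ⟨fun k => -L k, hL.neg, fun k => by rw [Complex.exp_neg, hLf]⟩

lemma hasContinuousLog_const {c : ℂ} (hc : c ≠ 0) : HasContinuousLog fun _ : K => c :=
  ⟨fun _ => Complex.log c, continuous_const, fun _ => Complex.exp_log hc⟩

lemma sub_eq_sub_of_exp_eq_exp [PreconnectedSpace K] {u v : K → ℂ} (hu : Continuous u)
    (hv : Continuous v) (h : ∀ k, Complex.exp (u k) = Complex.exp (v k)) (k k' : K) :
    u k - v k = u k' - v k' := by
  have hexp : ∀ k, Complex.exp (u k - v k) = 1 := fun k => by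
    rw [Complex.exp_sub, h, div_self (Complex.exp_ne_zero _)]
  exact Complex.isCoveringMap_exp.const_of_comp (hu.sub hv)
    (fun k k' => Subtype.ext ((hexp k).trans (hexp k').symm)) k k'

lemma one_le_norm_sub_of_exp_eq_exp {w w' : ℂ} (h : Complex.exp w = Complex.exp w')
    (hne : w ≠ w') : 1 ≤ ‖w - w'‖ := by
  obtain ⟨n, rfl⟩ := Complex.exp_eq_exp_iff_exists_int.1 h
  have hn : n ≠ 0 := by
    rintro rfl
    simp at hne
  have hn1 : (1 : ℝ) ≤ |(n : ℝ)| := mod_cast Int.one_le_abs hn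
  have hnorm : ‖w' + n * (2 * Real.pi * Complex.I) - w'‖ = |(n : ℝ)| * (2 * Real.pi) := by
    simp [abs_of_pos Real.pi_pos]
  rw [hnorm]
  nlinarith [Real.pi_gt_three]

lemma hasContinuousLog_of_homotopy {H : I × K → ℂ} (hH : Continuous H) (hne : ∀ p, H p ≠ 0)
    (h₀ : HasContinuousLog fun k => H (0, k)) : HasContinuousLog fun k => H (1, k) := by
  obtain ⟨L, hL, hLH⟩ := h₀
  let H' : C(I × K, {z : ℂ // z ≠ 0}) := ⟨fun p => ⟨H p, hne p⟩, hH.subtype_mk hne⟩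
  have hLH' : ∀ k, H' (0, k) = ⟨_, Complex.exp_ne_zero ((⟨L, hL⟩ : C(K, ℂ)) k)⟩ :=
    fun k => Subtype.ext (hLH k).symm
  let M := Complex.isCoveringMap_exp.liftHomotopy H' ⟨L, hL⟩ hLH'
  refine ⟨fun k => M (1, k), M.continuous.comp (by fun_prop), fun k => ?_⟩
  exact congrArg Subtype.val
    (congrFun (Complex.isCoveringMap_exp.liftHomotopy_lifts H' ⟨L, hL⟩ hLH') (1, k))

lemma hasContinuousLog_of_ne_zero {φ : ℂ → ℂ} (hφ : Continuous φ) (hne : ∀ z, φ z ≠ 0) :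
    HasContinuousLog φ := by
  have hlog := hasContinuousLog_of_homotopy (H := fun p : I × ℂ => φ ((p.1 : ℝ) * p.2))
    (by fun_prop) (fun p => hne _) (by simpa using hasContinuousLog_const (hne 0))
  simpa using hlog

end ContinuousLog

lemma not_hasContinuousLog_sub_center {a : ℂ} {R : ℝ} (hR : 0 < R) :
    ¬ HasContinuousLog fun z : sphere a R => (z : ℂ) - a := by
  rintro ⟨L, hL, hLexp⟩
  let u : ℝ → ℂ := fun θ => L ⟨circleMap a R θ, circleMap_mem_sphere a hR.le θ⟩
  have hu : Continuous u := hL.comp (by fun_prop)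
  have hexp : ∀ θ : ℝ, Complex.exp (u θ) = Complex.exp (Real.log R + θ * Complex.I) := fun θ => by
    rw [hLexp, Complex.exp_add, ← Complex.ofReal_exp, Real.exp_log hR]
    exact (circleMap_sub_center a R θ).trans (circleMap_zero R θ)
  have hper : u (2 * Real.pi) = u 0 := by
    simp only [u, (periodic_circleMap a R).eq]
  have hjump := sub_eq_sub_of_exp_eq_exp hu (by fun_prop) hexp (2 * Real.pi) 0
  rw [hper] at hjump
  simp [Real.pi_ne_zero] at hjump

/-! ### Eilenberg's separation criterion -/

lemma hasContinuousLog_of_connectedComponentIn_eq {S : Set ℂ} (hS : IsClosed S) {a b : ℂ}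
    (ha : a ∉ S) (hb : b ∉ S) (h : connectedComponentIn Sᶜ a = connectedComponentIn Sᶜ b) :
    HasContinuousLog fun z : S => ((z : ℂ) - a) / (z - b) := by
  have hpath : IsPathConnected (connectedComponentIn Sᶜ a) :=
    hS.isOpen_compl.connectedComponentIn.isConnected_iff_isPathConnected.1
      (isConnected_connectedComponentIn_iff.2 ha)
  obtain ⟨p, hp⟩ := hpath.joinedIn b (h ▸ mem_connectedComponentIn hb) a
    (mem_connectedComponentIn ha)
  have hne : ∀ (t : I) (z : S), (z : ℂ) - p t ≠ 0 := fun t z hz =>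
    connectedComponentIn_subset _ _ (hp t) (sub_eq_zero.1 hz ▸ z.2)
  have hzb : ∀ z : S, (z : ℂ) - b ≠ 0 := fun z => by simpa using hne 0 z
  have hlog := hasContinuousLog_of_homotopy (K := S)
    (H := fun q => ((q.2 : ℂ) - p q.1) / (q.2 - b))
    (Continuous.div (by fun_prop) (by fun_prop) fun q => hzb q.2)
    (fun q => div_ne_zero (hne q.1 q.2) (hzb q.2))
    (by simpa [hzb] using hasContinuousLog_const one_ne_zero)
  simpa using hlog

lemma frontier_connectedComponentIn_subset {α : Type*} [TopologicalSpace α]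
    [LocallyConnectedSpace α] {U : Set α} (hU : IsOpen U) (x : α) :
    frontier (connectedComponentIn U x) ⊆ Uᶜ := by
  intro z hz hzU
  rw [hU.connectedComponentIn.frontier_eq] at hz
  obtain ⟨y, hyz, hyx⟩ := mem_closure_iff.1 hz.1 _ hU.connectedComponentIn
    (mem_connectedComponentIn hzU)
  refine hz.2 ?_
  rw [connectedComponentIn_eq hyx, ← connectedComponentIn_eq hyz]
  exact mem_connectedComponentIn hzU

lemma not_hasContinuousLog_of_isBounded_connectedComponentIn {S : Set ℂ} (hS : IsClosed S)
    {a b : ℂ} (ha : a ∉ S) (hb : b ∉ S) (hab : b ∉ connectedComponentIn Sᶜ a)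
    (hbdd : Bornology.IsBounded (connectedComponentIn Sᶜ a)) :
    ¬ HasContinuousLog fun z : S => ((z : ℂ) - a) / (z - b) := by
  classical
  rintro ⟨L, hL, hLexp⟩
  set U := connectedComponentIn Sᶜ a
  have haU : a ∈ U := mem_connectedComponentIn ha
  obtain ⟨g, hg⟩ := ContinuousMap.exists_restrict_eq hS (⟨L, hL⟩ : C(S, ℂ))
  have hgexp : ∀ z ∈ S, (z - b) * Complex.exp (g z) = z - a := fun z hz => by
    have hgz : g z = L ⟨z, hz⟩ := DFunLike.congr_fun hg ⟨z, hz⟩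
    rw [hgz, hLexp, mul_div_cancel₀ _ (sub_ne_zero.2 (ne_of_mem_of_not_mem hz hb))]
  -- Gluing `z - a` outside `U` to the extended logarithm inside `U` removes the zero at `a`.
  let φ : ℂ → ℂ := fun z => if z ∈ U then (z - b) * Complex.exp (g z) else z - a
  have hφ : Continuous φ := by
    refine Continuous.if (fun z hz => hgexp z ?_) (by fun_prop) (by fun_prop)
    exact notMem_compl_iff.1 (frontier_connectedComponentIn_subset hS.isOpen_compl a hz)
  have hne : ∀ z, φ z ≠ 0 := fun z => by
    by_cases hz : z ∈ U
    · simpa [φ, hz, sub_eq_zero] using fun h : z = b => hab (h ▸ hz)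
    · simpa [φ, hz, sub_eq_zero] using fun h : z = a => hz (h ▸ haU)
  obtain ⟨R, hR, hUR⟩ := hbdd.subset_ball_lt 0 a
  have hsphere : φ ∘ (↑) = fun z : sphere a R => (z : ℂ) - a := funext fun z =>
    if_neg fun hz => (mem_ball.1 (hUR hz)).ne z.2
  exact not_hasContinuousLog_sub_center hR
    (hsphere ▸ (hasContinuousLog_of_ne_zero hφ hne).comp continuous_subtype_val)

lemma isPreconnected_setOf_lt_norm {R : ℝ} (hR : 0 < R) : IsPreconnected {z : ℂ | R < ‖z‖} := by
  have himage : Complex.exp '' {w | Real.log R < w.re} = {z | R < ‖z‖} := by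
    refine Subset.antisymm ?_ fun z hz => ?_
    · rintro _ ⟨w, hw, rfl⟩
      simpa [Complex.norm_exp, ← Real.log_lt_iff_lt_exp hR] using hw
    · have hz₀ : z ≠ 0 := norm_pos_iff.1 (hR.trans hz)
      exact ⟨Complex.log z, by simpa [Complex.log_re] using Real.log_lt_log hR hz,
        Complex.exp_log hz₀⟩
  rw [← himage]
  exact (convex_halfSpace_re_gt _).isPreconnected.image _ Complex.continuous_exp.continuousOn

lemma connectedComponentIn_compl_eq_of_not_isBounded {S : Set ℂ} (hS : Bornology.IsBounded S)
    {a b : ℂ} (ha : ¬ Bornology.IsBounded (connectedComponentIn Sᶜ a))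
    (hb : ¬ Bornology.IsBounded (connectedComponentIn Sᶜ b)) :
    connectedComponentIn Sᶜ a = connectedComponentIn Sᶜ b := by
  obtain ⟨R, hR, hSR⟩ := hS.exists_pos_norm_le
  have hout : {z : ℂ | R < ‖z‖} ⊆ Sᶜ := fun z hz hzS => (hSR z hzS).not_gt hz
  have hfar : ∀ {c : ℂ}, ¬ Bornology.IsBounded (connectedComponentIn Sᶜ c) →
      ∃ z ∈ connectedComponentIn Sᶜ c, R < ‖z‖ := fun hc => by
    by_contra! h
    exact hc (isBounded_iff_forall_norm_le.2 ⟨R, h⟩)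
  obtain ⟨z, hza, hz⟩ := hfar ha
  obtain ⟨w, hwb, hw⟩ := hfar hb
  rw [connectedComponentIn_eq hza, connectedComponentIn_eq hwb]
  exact connectedComponentIn_eq
    ((isPreconnected_setOf_lt_norm hR).subset_connectedComponentIn hz hout hw)

theorem hasContinuousLog_iff_connectedComponentIn_eq {S : Set ℂ} (hS : IsCompact S) {a b : ℂ}
    (ha : a ∉ S) (hb : b ∉ S) :
    HasContinuousLog (fun z : S => ((z : ℂ) - a) / (z - b)) ↔
      connectedComponentIn Sᶜ a = connectedComponentIn Sᶜ b := by
  refine ⟨fun hlog => ?_, hasContinuousLog_of_connectedComponentIn_eq hS.isClosed ha hb⟩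
  by_contra hsep
  refine hsep (connectedComponentIn_compl_eq_of_not_isBounded hS.isBounded (fun hbdd => ?_)
    fun hbdd => ?_)
  · exact not_hasContinuousLog_of_isBounded_connectedComponentIn hS.isClosed ha hb
      (fun h => hsep (connectedComponentIn_eq h)) hbdd hlog
  · refine not_hasContinuousLog_of_isBounded_connectedComponentIn hS.isClosed hb ha
      (fun h => hsep (connectedComponentIn_eq h).symm) hbdd ?_
    simpa only [inv_div] using hlog.inv

theorem hasContinuousLog_iff_connectedComponentIn_eq_of_homeomorph {E : Type*} [TopologicalSpace E]
    (e : E ≃ₜ ℂ) {S : Set E} (hS : IsCompact S) {a b : E} (ha : a ∉ S) (hb : b ∉ S) :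
    HasContinuousLog (fun x : S => (e x - e a) / (e x - e b)) ↔
      connectedComponentIn Sᶜ a = connectedComponentIn Sᶜ b := by
  have hcomp : ∀ {c : E}, c ∉ S →
      e '' connectedComponentIn Sᶜ c = connectedComponentIn (e '' S)ᶜ (e c) := fun hc => by
    rw [e.image_connectedComponentIn hc, image_compl_eq e.bijective]
  rw [← e.injective.image_injective.eq_iff, hcomp ha, hcomp hb,
    ← hasContinuousLog_iff_connectedComponentIn_eq (hS.image e.continuous)
      (by simpa using ha) (by simpa using hb)]
  refine ⟨fun h => ?_, fun h => h.comp (e.image S).continuous⟩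
  convert h.comp (e.image S).symm.continuous using 2 with z
  simp

/-! ### Local path connectedness of locally connected compact metric spaces -/

/-- A metric space is uniformly locally connected if nearby points lie in small connected sets,
with "nearby" depending only on "small". -/
def UniformlyLocallyConnected (X : Type*) [PseudoMetricSpace X] : Prop :=
  ∀ ε > 0, ∃ δ > 0, ∀ x y : X, dist x y < δ → ∃ C, IsPreconnected C ∧ x ∈ C ∧ y ∈ C ∧ C ⊆ ball x ε

lemma uniformlyLocallyConnected_of_compactSpace (X : Type*) [PseudoMetricSpace X] [CompactSpace X]
    [LocallyConnectedSpace X] : UniformlyLocallyConnected X := by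
  intro ε hε
  choose U hUball hUopen hxU hUconn using fun x : X =>
    locallyConnectedSpace_iff_subsets_isOpen_isConnected.1 ‹_› x _
      (ball_mem_nhds x (half_pos hε))
  obtain ⟨δ, hδ, hδU⟩ := lebesgue_number_lemma_of_metric isCompact_univ hUopen
    fun x _ => mem_iUnion.2 ⟨x, hxU x⟩
  refine ⟨δ, hδ, fun x y hxy => ?_⟩
  obtain ⟨z, hz⟩ := hδU x (mem_univ x)
  have hxz : x ∈ U z := hz (mem_ball_self hδ)
  refine ⟨U z, (hUconn z).isPreconnected, hxz, hz (mem_ball'.2 hxy), (hUball z).trans ?_⟩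
  refine ball_subset_ball' ?_
  have := mem_ball'.1 (hUball z hxz)
  linarith

/-- A finite sequence of points from `x` to `y` with steps shorter than `δ`, continued by the
constant `y`, so that prolonging it changes only the bound `length`. -/
structure FineChain {X : Type*} [PseudoMetricSpace X] (x y : X) (δ : ℝ) where
  point : ℕ → X
  /-- An index from which on the chain is constant. -/
  length : ℕ
  point_zero : point 0 = x
  point_of_length_le : ∀ k, length ≤ k → point k = y
  dist_lt : ∀ k, dist (point k) (point (k + 1)) < δ

section FineChain

variable {X : Type*} [PseudoMetricSpace X] {x y z : X} {δ ε : ℝ}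

/-- The constant chain. -/
def FineChain.const (x : X) (hδ : 0 < δ) : FineChain x x δ :=
  ⟨fun _ => x, 0, rfl, fun _ _ => rfl, fun _ => by rwa [dist_self]⟩

/-- The one-step chain. -/
def FineChain.single (h : dist x y < δ) : FineChain x y δ where
  point k := if k = 0 then x else y
  length := 1
  point_zero := if_pos rfl
  point_of_length_le k hk := if_neg (by lia)
  dist_lt k := by
    rcases eq_or_ne k 0 with rfl | hk
    · simpa
    · simpa [hk] using dist_nonneg.trans_lt h

/-- The chain `c` with a point prepended. -/
def FineChain.cons (h : dist x y < δ) (c : FineChain y z δ) : FineChain x z δ where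
  point k := Nat.casesOn k x c.point
  length := c.length + 1
  point_zero := rfl
  point_of_length_le
    | k + 1, hk => c.point_of_length_le k (by lia)
  dist_lt
    | 0 => by simpa [c.point_zero]
    | k + 1 => c.dist_lt k

lemma exists_fineChain_of_isPreconnected {C : Set X} (hC : IsPreconnected C) (hx : x ∈ C)
    (hy : y ∈ C) (hδ : 0 < δ) : ∃ c : FineChain x y δ, ∀ k, c.point k ∈ C := by
  have hsteps : Relation.ReflTransGen (fun u v => u ∈ C ∧ dist u v < δ) x y := by
    refine hC.induction₂' _ (fun u hu => ?_) (fun _ _ _ _ _ _ => .trans) hx hy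
    filter_upwards [self_mem_nhdsWithin, nhdsWithin_le_nhds (ball_mem_nhds u hδ)] with v hv huv
    exact ⟨.single ⟨hu, mem_ball'.1 huv⟩, .single ⟨hv, huv⟩⟩
  clear hx
  induction hsteps using Relation.ReflTransGen.head_induction_on with
  | refl => exact ⟨.const y hδ, fun _ => hy⟩
  | head h _ ih =>
    obtain ⟨c, hc⟩ := ih
    exact ⟨.cons h.2 c, fun | 0 => h.1 | k + 1 => hc k⟩

/-- Every step of `c` can be replaced by a chain of at most `N` steps shorter than `δ'` that stays
within `ε` of the beginning of that step. -/
def FineChain.CanSubdivide (c : FineChain x y δ) (δ' ε : ℝ) (N : ℕ) : Prop :=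
  ∀ k, ∃ d : FineChain (c.point k) (c.point (k + 1)) δ',
    d.length ≤ N ∧ ∀ j, dist (d.point j) (c.point k) < ε

lemma FineChain.exists_canSubdivide {δ' : ℝ} (c : FineChain x y δ) (hδ' : 0 < δ') (hε : 0 < ε)
    (h : ∀ k, ∃ d : FineChain (c.point k) (c.point (k + 1)) δ',
      ∀ j, dist (d.point j) (c.point k) < ε) :
    ∃ N > 0, c.CanSubdivide δ' ε N := by
  choose d hd using h
  let N := (Finset.range c.length).sup (fun k => (d k).length)
  refine ⟨N + 1, N.succ_pos, fun k => ?_⟩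
  rcases lt_or_ge k c.length with hk | hk
  · have hN : (d k).length ≤ N :=
      Finset.le_sup (f := fun k => (d k).length) (Finset.mem_range.2 hk)
    exact ⟨d k, hN.trans N.le_succ, hd k⟩
  · rw [c.point_of_length_le k hk, c.point_of_length_le (k + 1) (by lia)]
    exact ⟨.const y hδ', N.succ.zero_le, fun _ => by simpa [FineChain.const]⟩

lemma FineChain.CanSubdivide.exists_subdivision {δ' : ℝ} {N : ℕ} {c : FineChain x y δ}
    (h : c.CanSubdivide δ' ε N) (hN : 0 < N) :
    ∃ c' : FineChain x y δ', c'.length = c.length * N ∧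
      ∀ k, dist (c'.point k) (c.point (k / N)) < ε := by
  choose d hdN hd using h
  let q : ℕ → X := fun k => (d (k / N)).point (k % N)
  have hqlt : ∀ m, ∀ r < N, q (N * m + r) = (d m).point r := fun m r hr => by
    simp only [q]
    rw [Nat.mul_add_div hN, Nat.div_eq_of_lt hr, add_zero, Nat.mul_add_mod, Nat.mod_eq_of_lt hr]
  have hqmul : ∀ m, q (N * m) = c.point m := fun m => (hqlt m 0 hN).trans (d m).point_zero
  have hdist : ∀ k, dist (q k) (q (k + 1)) < δ' := fun k => by
    rw [← Nat.div_add_mod k N, add_assoc, hqlt _ _ (k.mod_lt hN)]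
    convert (d (k / N)).dist_lt (k % N) using 2
    rcases (Nat.succ_le_of_lt (k.mod_lt hN)).lt_or_eq with hlt | heq
    · exact hqlt _ _ hlt
    · rw [← Nat.succ_eq_add_one, heq, ← Nat.mul_succ, hqmul, (d _).point_of_length_le _ (hdN _)]
  have hend : q (c.length * N) = y := by
    rw [mul_comm, hqmul, c.point_of_length_le _ le_rfl]
  refine ⟨⟨fun k => q (min k (c.length * N)), c.length * N, ?_, fun k hk => ?_, fun k => ?_⟩, rfl,
    fun k => ?_⟩
  · rw [Nat.zero_min, ← c.point_zero]
    exact hqmul 0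
  · rw [min_eq_right hk, hend]
  · rcases lt_or_ge k (c.length * N) with hk | hk
    · rw [min_eq_left hk.le, min_eq_left hk]
      exact hdist k
    · rw [min_eq_right hk, min_eq_right (by lia), dist_self]
      exact dist_nonneg.trans_lt (hdist 0)
  · rcases le_total k (c.length * N) with hk | hk
    · simpa only [min_eq_left hk] using hd _ _
    · have hky : c.point (k / N) = y :=
        c.point_of_length_le _ ((Nat.le_div_iff_mul_le hN).2 hk)
      simpa only [min_eq_right hk, hend, hky, dist_self] using dist_nonneg.trans_lt (hd 0 0)

/-- The step function on `[0, 1]` running through the points of the chain. -/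
noncomputable def FineChain.sample (c : FineChain x y δ) (t : ℝ) : X := c.point ⌊t * c.length⌋₊

lemma FineChain.sample_zero (c : FineChain x y δ) : c.sample 0 = x := by
  simp [sample, c.point_zero]

lemma FineChain.sample_one (c : FineChain x y δ) : c.sample 1 = y := by
  simp [sample, c.point_of_length_le]

lemma FineChain.eventually_dist_sample_lt (c : FineChain x y δ) (hδ : 0 < δ) (t : ℝ) :
    ∀ᶠ s in 𝓝 t, dist (c.sample s) (c.sample t) < δ := by
  have hnear : ∀ᶠ s in 𝓝 t, dist (s * (c.length : ℝ)) (t * c.length) < 1 :=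
    (by fun_prop : Continuous fun s : ℝ => s * (c.length : ℝ)).continuousAt.eventually
      (ball_mem_nhds _ one_pos)
  have hfloor : ∀ {a b : ℝ}, a - b < 1 → ⌊a⌋₊ < ⌊b⌋₊ + 2 := fun {a b} h => by
    rw [Nat.floor_lt' (by lia)]
    push_cast
    linarith [Nat.lt_floor_add_one b]
  filter_upwards [hnear] with s hs
  rw [Real.dist_eq, abs_lt] at hs
  have hst := hfloor hs.2
  have hts := hfloor (a := t * c.length) (b := s * c.length) (by linarith)
  unfold sample
  obtain h | h | h : ⌊s * c.length⌋₊ = ⌊t * c.length⌋₊ ∨ ⌊s * c.length⌋₊ + 1 = ⌊t * c.length⌋₊ ∨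
    ⌊t * c.length⌋₊ + 1 = ⌊s * c.length⌋₊ := by lia
  · simpa [h]
  · rw [← h]
    exact c.dist_lt _
  · rw [← h, dist_comm]
    exact c.dist_lt _

lemma FineChain.dist_sample_lt {δ' : ℝ} {c : FineChain x y δ} {c' : FineChain x y δ'} {N : ℕ}
    (hN : 0 < N) (hlength : c'.length = c.length * N)
    (h : ∀ k, dist (c'.point k) (c.point (k / N)) < ε) (t : ℝ) :
    dist (c.sample t) (c'.sample t) < ε := by
  have hfloor : ⌊t * c.length⌋₊ = ⌊t * c'.length⌋₊ / N := by
    rw [← Nat.floor_div_natCast, hlength, Nat.cast_mul, ← mul_assoc,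
      mul_div_cancel_right₀ _ (by positivity)]
  rw [dist_comm, sample, sample, hfloor]
  exact h _

lemma UniformlyLocallyConnected.exists_approximatePaths (hX : UniformlyLocallyConnected X)
    {η : ℕ → ℝ} (hη : ∀ n, 0 < η n) :
    ∃ δ > 0, ∀ x y : X, dist x y < δ → ∃ F : ℕ → ℝ → X,
      (∀ n, F n 0 = x) ∧ (∀ n, F n 1 = y) ∧ (∀ t, dist (F 0 t) x < η 0) ∧
      (∀ n t, ∀ᶠ s in 𝓝 t, dist (F n s) (F n t) < η n) ∧
      ∀ n t, dist (F n t) (F (n + 1) t) < η n := by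
  choose δ' hδ' hδ'C using fun n => hX (η n) (hη n)
  let δ : ℕ → ℝ := fun n => min (δ' n) (η n)
  have hδ : ∀ n, 0 < δ n := fun n => lt_min (hδ' n) (hη n)
  have hnext : ∀ {x y : X} (n) (c : FineChain x y (δ n)), ∃ c' : FineChain x y (δ (n + 1)),
      ∀ t, dist (c.sample t) (c'.sample t) < η n := by
    intro x y n c
    obtain ⟨N, hN, hsub⟩ := c.exists_canSubdivide (hδ (n + 1)) (hη n) fun k => by
      obtain ⟨C, hC, hk, hk', hCball⟩ := hδ'C n _ _ ((c.dist_lt k).trans_le (min_le_left _ _))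
      obtain ⟨d, hd⟩ := exists_fineChain_of_isPreconnected hC hk hk' (hδ (n + 1))
      exact ⟨d, fun j => hCball (hd j)⟩
    obtain ⟨c', hlength, hc'⟩ := hsub.exists_subdivision hN
    exact ⟨c', FineChain.dist_sample_lt hN hlength hc'⟩
  choose next hnext using @hnext
  refine ⟨δ 0, hδ 0, fun x y hxy => ?_⟩
  let c : ∀ n, FineChain x y (δ n) := Nat.rec (.single hxy) next
  refine ⟨fun n => (c n).sample, fun n => (c n).sample_zero, fun n => (c n).sample_one,
    fun t => ?_, fun n t => ?_, fun n => hnext n (c n)⟩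
  · have hη₀ : dist y x < η 0 := dist_comm x y ▸ hxy.trans_le (min_le_right _ _)
    change dist (if _ then x else y) x < η 0
    split_ifs
    · simpa using hη 0
    · exact hη₀
  · filter_upwards [(c n).eventually_dist_sample_lt (hδ n) t] with s hs
    exact hs.trans_le (min_le_right _ _)

end FineChain

lemma continuous_of_tendstoUniformly_of_oscillation {ι α β : Type*} [TopologicalSpace α]
    [PseudoMetricSpace β] {F : ι → α → β} {f : α → β} {p : Filter ι} (hF : TendstoUniformly F f p)
    (hosc : ∀ ε > 0, ∃ᶠ n in p, ∀ t, ∀ᶠ s in 𝓝 t, dist (F n s) (F n t) < ε) : Continuous f := by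
  refine continuous_iff_continuousAt.2 fun t => Metric.tendsto_nhds.2 fun ε hε => ?_
  obtain ⟨n, hn, hFn⟩ := ((hosc (ε / 3) (by positivity)).and_eventually
    (Metric.tendstoUniformly_iff.1 hF (ε / 3) (by positivity))).exists
  filter_upwards [hn t] with s hs
  have hs' := hFn s
  have ht' := hFn t
  rw [dist_comm] at ht'
  linarith [dist_triangle4 (f s) (F n s) (F n t) (f t)]

theorem UniformlyLocallyConnected.exists_joinedIn {X : Type*} [MetricSpace X] [CompleteSpace X]
    (hX : UniformlyLocallyConnected X) {ε : ℝ} (hε : 0 < ε) :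
    ∃ δ > 0, ∀ x y : X, dist x y < δ → JoinedIn (ball x ε) x y := by
  obtain ⟨C, hC, hCε⟩ : ∃ C > 0, C + C / 2 < ε := ⟨ε / 2, by positivity, by linarith⟩
  obtain ⟨δ, hδ, hF⟩ := hX.exists_approximatePaths (η := fun n => C / 2 / 2 ^ n)
    fun n => by positivity
  refine ⟨δ, hδ, fun x y hxy => ?_⟩
  obtain ⟨F, hF₀, hF₁, hFx, hosc, hF⟩ := hF x y hxy
  have hle : ∀ t n, dist (F n t) (F (n + 1) t) ≤ C / 2 / 2 ^ n := fun t n => (hF n t).le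
  have hzero : Tendsto (fun n : ℕ => C / 2 ^ n) atTop (𝓝 0) :=
    tendsto_const_nhds.div_atTop (tendsto_pow_atTop_atTop_of_one_lt one_lt_two)
  have hsmall : ∀ r > 0, ∀ᶠ n : ℕ in atTop, C / 2 ^ n < r := fun r hr =>
    hzero.eventually_lt_const hr
  choose f hf using fun t => cauchySeq_tendsto_of_complete (cauchySeq_of_le_geometric_two (hle t))
  have hunif : TendstoUniformly F f atTop := by
    refine Metric.tendstoUniformly_iff.2 fun r hr => ?_
    filter_upwards [hsmall r hr] with n hn t
    rw [dist_comm]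
    exact (dist_le_of_le_geometric_two_of_tendsto (hle t) (hf t) n).trans_lt hn
  have hcont : Continuous f := continuous_of_tendstoUniformly_of_oscillation hunif fun r hr => by
    refine ((hsmall r hr).mono fun n hn t => (hosc n t).mono fun s hs => ?_).frequently
    exact hs.trans (lt_of_le_of_lt (by gcongr; linarith) hn)
  refine .ofLine hcont.continuousOn (tendsto_nhds_unique (hf 0) ?_)
    (tendsto_nhds_unique (hf 1) ?_) ?_
  · simp only [hF₀, tendsto_const_nhds]
  · simp only [hF₁, tendsto_const_nhds]
  · rintro _ ⟨t, -, rfl⟩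
    have hlim := dist_le_of_le_geometric_two_of_tendsto₀ (hle t) (hf t)
    have hx := hFx t
    rw [pow_zero, div_one] at hx
    rw [mem_ball]
    linarith [dist_triangle (f t) (F 0 t) x, dist_comm (f t) (F 0 t)]

theorem UniformlyLocallyConnected.locallyPathConnectedSpace {X : Type*} [MetricSpace X]
    [CompleteSpace X] (hX : UniformlyLocallyConnected X) : LocallyPathConnectedSpace X := by
  refine locallyPathConnectedSpace_iff_pathComponentIn_mem_nhds.2 fun x u hu hxu => ?_
  obtain ⟨ε, hε, hεu⟩ := Metric.isOpen_iff.1 hu x hxu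
  obtain ⟨δ, hδ, hjoin⟩ := hX.exists_joinedIn hε
  filter_upwards [ball_mem_nhds x hδ] with y hy
  exact (hjoin x y (mem_ball'.1 hy)).mono hεu

theorem locallyPathConnectedSpace_of_compactSpace (X : Type*) [TopologicalSpace X]
    [MetrizableSpace X] [CompactSpace X] [LocallyConnectedSpace X] :
    LocallyPathConnectedSpace X :=
  let _ : MetricSpace X := TopologicalSpace.metrizableSpaceMetric X
  (uniformlyLocallyConnected_of_compactSpace X).locallyPathConnectedSpace

/-! ### Injective paths -/

/-- A closed set `K` containing both endpoints of `α` bridges its gaps along `γ` if `γ` takes the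
same value at the two ends of each component of `Kᶜ`; these ends are the last point of `K` before
and the first point of `K` after some `m`. -/
structure BridgesGaps {α Y : Type*} [LinearOrder α] [BoundedOrder α] [TopologicalSpace α]
    (γ : α → Y) (K : Set α) : Prop where
  isClosed : IsClosed K
  bot_mem : ⊥ ∈ K
  top_mem : ⊤ ∈ K
  eq_of_gap : ∀ m a b, IsGreatest (K ∩ Iic m) a → IsLeast (K ∩ Ici m) b → γ a = γ b

section BridgesGaps

variable {α Y : Type*} [LinearOrder α] [BoundedOrder α] [TopologicalSpace α]
  {γ : α → Y} {K : Set α}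

lemma bridgesGaps_univ (γ : α → Y) : BridgesGaps γ univ where
  isClosed := isClosed_univ
  bot_mem := mem_univ _
  top_mem := mem_univ _
  eq_of_gap m a b ha hb := by
    rw [univ_inter] at ha hb
    rw [ha.unique isGreatest_Iic, hb.unique isLeast_Ici]

variable [OrderTopology α]

lemma BridgesGaps.diff_Ioo (hK : BridgesGaps γ K) {u v : α} (hu : u ∈ K) (hv : v ∈ K)
    (huv : γ u = γ v) : BridgesGaps γ (K \ Ioo u v) where
  isClosed := hK.isClosed.sdiff isOpen_Ioo
  bot_mem := ⟨hK.bot_mem, fun h => not_lt_bot h.1⟩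
  top_mem := ⟨hK.top_mem, fun h => not_top_lt h.2⟩
  eq_of_gap m a b := by
    rintro ⟨⟨⟨haK, haI⟩, ham⟩, ha⟩ ⟨⟨⟨hbK, hbI⟩, hmb⟩, hb⟩
    rw [mem_Iic] at ham
    rw [mem_Ici] at hmb
    have hle : ∀ x ∈ K, x ∉ Ioo u v → x ≤ m → x ≤ a := fun x hx hxI hxm => ha ⟨⟨hx, hxI⟩, hxm⟩
    have hge : ∀ x ∈ K, x ∉ Ioo u v → m ≤ x → b ≤ x := fun x hx hxI hmx => hb ⟨⟨hx, hxI⟩, hmx⟩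
    by_cases hm : m ∈ Ioo u v
    · have hau : a = u := (not_lt.1 fun h => haI ⟨h, ham.trans_lt hm.2⟩).antisymm
        (hle u hu (by simp) hm.1.le)
      have hbv : b = v := (hge v hv (by simp) hm.2.le).antisymm
        (not_lt.1 fun h => hbI ⟨hm.1.trans_le hmb, h⟩)
      rw [hau, hbv, huv]
    · refine hK.eq_of_gap m a b ⟨⟨haK, ham⟩, fun x hx => ?_⟩ ⟨⟨hbK, hmb⟩, fun x hx => ?_⟩
      all_goals grind

variable [CompactSpace α]

lemma BridgesGaps.exists_isGreatest (hK : BridgesGaps γ K) (m : α) :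
    ∃ a, IsGreatest (K ∩ Iic m) a :=
  (hK.isClosed.inter isClosed_Iic).isCompact.exists_isGreatest ⟨⊥, hK.bot_mem, bot_le⟩

lemma BridgesGaps.exists_isLeast (hK : BridgesGaps γ K) (m : α) : ∃ b, IsLeast (K ∩ Ici m) b :=
  (hK.isClosed.inter isClosed_Ici).isCompact.exists_isLeast ⟨⊤, hK.top_mem, le_top⟩

lemma BridgesGaps.sInter [TopologicalSpace Y] [T2Space Y] (hγ : Continuous γ) {c : Set (Set α)}
    (hc : ∀ K ∈ c, BridgesGaps γ K) (hchain : IsChain (· ⊆ ·) c) (hne : c.Nonempty) :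
    BridgesGaps γ (⋂₀ c) where
  isClosed := isClosed_sInter fun K hK => (hc K hK).isClosed
  bot_mem K hK := (hc K hK).bot_mem
  top_mem K hK := (hc K hK).top_mem
  eq_of_gap m a b ha hb := by
    by_contra hab
    obtain ⟨U, V, hU, hV, haU, hbV, hUV⟩ := t2_separation hab
    let W : Set α := (γ ⁻¹' U ∪ Iio a ∪ Ioi m) ∩ (γ ⁻¹' V ∪ Iio m ∪ Ioi b)
    have hW : IsOpen W := (((hU.preimage hγ).union isOpen_Iio).union isOpen_Ioi).inter
      (((hV.preimage hγ).union isOpen_Iio).union isOpen_Ioi)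
    have hcW : ∀ x ∈ ⋂₀ c, x ∈ W := fun x hx => by
      have hxa : x ≤ m → x ≤ a := fun hxm => ha.2 ⟨hx, hxm⟩
      have hbx : m ≤ x → b ≤ x := fun hmx => hb.2 ⟨hx, hmx⟩
      grind
    have hdir : Directed (· ⊇ ·) fun K : c => (K : Set α) := fun K L =>
      (hchain.total K.2 L.2).elim (fun h => ⟨K, subset_rfl, h⟩) fun h => ⟨L, h, subset_rfl⟩
    have : Nonempty c := hne.to_subtype
    obtain ⟨⟨K, hKc⟩, hKW⟩ := exists_subset_nhds_of_compactSpace hdir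
      (fun K => (hc K K.2).isClosed) fun x hx => hW.mem_nhds (hcW x (by rwa [sInter_eq_iInter]))
    obtain ⟨a', ha'⟩ := (hc K hKc).exists_isGreatest m
    obtain ⟨b', hb'⟩ := (hc K hKc).exists_isLeast m
    have ha'U : γ a' ∈ U := ((hKW ha'.1.1).1.resolve_right ha'.1.2.not_gt).resolve_right
      (ha'.2 ⟨ha.1.1 K hKc, ha.1.2⟩).not_gt
    have hb'V : γ b' ∈ V := ((hKW hb'.1.1).2.resolve_right
      (hb'.2 ⟨hb.1.1 K hKc, hb.1.2⟩).not_gt).resolve_right hb'.1.2.not_gt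
    rw [(hc K hKc).eq_of_gap m a' b' ha' hb'] at ha'U
    exact disjoint_left.1 hUV ha'U hb'V

lemma exists_minimal_bridgesGaps [TopologicalSpace Y] [T2Space Y] (hγ : Continuous γ) :
    ∃ K, Minimal (BridgesGaps γ) K := by
  obtain ⟨K, -, hK⟩ := zorn_superset_nonempty {K | BridgesGaps γ K}
    (fun c hc hchain hne => ⟨⋂₀ c, .sInter hγ hc hchain hne, fun _ => sInter_subset_of_mem⟩)
    univ (bridgesGaps_univ γ)
  exact ⟨K, hK⟩

/-- Collapsing the gaps of `K` keeps the path continuous: near a point outside `K` the new path is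
constant, and at a point of `K` it is squeezed from the right by `p` and from the left by the dual
choice of ends. -/
lemma BridgesGaps.continuous_comp [TopologicalSpace Y] (hK : BridgesGaps γ K) (hγ : Continuous γ)
    {p : α → α} (hp : ∀ m, IsGreatest (K ∩ Iic m) (p m)) : Continuous (γ ∘ p) := by
  choose q hq using hK.exists_isLeast
  have hpq : γ ∘ p = γ ∘ q := funext fun m => hK.eq_of_gap m _ _ (hp m) (hq m)
  refine continuous_iff_continuousAt.2 fun m => ?_
  by_cases hm : m ∈ K
  · have hpm : p m = m := (hp m).1.2.antisymm ((hp m).2 ⟨hm, le_rfl⟩)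
    have hqm : q m = m := ((hq m).2 ⟨hm, le_rfl⟩).antisymm (hq m).1.2
    have hpcont : ContinuousWithinAt p (Ici m) m := by
      rw [ContinuousWithinAt, hpm]
      refine tendsto_of_tendsto_of_tendsto_of_le_of_le' tendsto_const_nhds
        (tendsto_id.mono_left nhdsWithin_le_nhds) ?_ (.of_forall fun x => (hp x).1.2)
      exact eventually_mem_nhdsWithin.mono fun x hx => (hp x).2 ⟨hm, hx⟩
    have hqcont : ContinuousWithinAt q (Iic m) m := by
      rw [ContinuousWithinAt, hqm]
      refine tendsto_of_tendsto_of_tendsto_of_le_of_le' (tendsto_id.mono_left nhdsWithin_le_nhds)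
        tendsto_const_nhds (.of_forall fun x => (hq x).1.2) ?_
      exact eventually_mem_nhdsWithin.mono fun x hx => (hq x).2 ⟨hm, hx⟩
    refine continuousAt_iff_continuous_left_right.2
      ⟨?_, hγ.continuousAt.comp_continuousWithinAt hpcont⟩
    rw [hpq]
    exact hγ.continuousAt.comp_continuousWithinAt hqcont
  · have hpm : p m < m := (hp m).1.2.lt_of_ne fun h => hm (h ▸ (hp m).1.1)
    have hmq : m < q m := (hq m).1.2.lt_of_ne fun h => hm (h ▸ (hq m).1.1)
    refine (continuousAt_const (y := γ (p m))).congr ?_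
    filter_upwards [Ioo_mem_nhds hpm hmq] with x hx
    have hpx : p x = p m := by
      refine le_antisymm ((hp m).2 ⟨(hp x).1.1, ?_⟩) ((hp x).2 ⟨(hp m).1.1, hx.1.le⟩)
      by_contra h
      exact ((hq m).2 ⟨(hp x).1.1, (not_le.1 h).le⟩).not_gt ((hp x).1.2.trans_lt hx.2)
    rw [Function.comp_apply, hpx]

theorem exists_continuous_ordConnected_fibers [TopologicalSpace Y] [T2Space Y]
    (hγ : Continuous γ) : ∃ τ : α → Y, Continuous τ ∧ τ ⊥ = γ ⊥ ∧ τ ⊤ = γ ⊤ ∧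
      ∀ y, (τ ⁻¹' {y}).OrdConnected := by
  obtain ⟨K, hK, hmin⟩ := exists_minimal_bridgesGaps hγ
  choose p hp using hK.exists_isGreatest
  have hpmono : Monotone p := fun s t hst => (hp t).2 ⟨(hp s).1.1, (hp s).1.2.trans hst⟩
  refine ⟨γ ∘ p, hK.continuous_comp hγ hp, ?_, ?_, fun y => ⟨?_⟩⟩
  · rw [Function.comp_apply, le_bot_iff.1 (hp ⊥).1.2]
  · rw [Function.comp_apply, top_le_iff.1 ((hp ⊤).2 ⟨hK.top_mem, le_rfl⟩)]
  · rintro s hs t rfl r ⟨hsr, hrt⟩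
    have hgap := hmin (hK.diff_Ioo (hp s).1.1 (hp t).1.1 hs) sdiff_subset (hp r).1.1
    rcases (hpmono hsr).eq_or_lt with h | h
    · exact (congrArg γ h).symm.trans hs
    rcases (hpmono hrt).eq_or_lt with h' | h'
    · exact congrArg γ h'
    · exact absurd ⟨h, h'⟩ hgap.2

end BridgesGaps

lemma continuous_infDist_image_Iic {α Y : Type*} [LinearOrder α] [TopologicalSpace α]
    [OrderTopology α] [CompactSpace α] [PseudoMetricSpace Y] {τ : α → Y} (hτ : Continuous τ) :
    Continuous fun p : Y × α => infDist p.1 (τ '' Iic p.2) := by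
  have hrange : ∀ t, τ '' Iic t = range fun s => τ (min s t) := fun t => by
    refine Subset.antisymm ?_ (range_subset_iff.2 fun s => mem_image_of_mem τ (min_le_right s t))
    rintro _ ⟨s, hs, rfl⟩
    exact ⟨s, congrArg τ (min_eq_left hs)⟩
  have hinf : ∀ y t, infDist y (τ '' Iic t) = sInf ((fun s => dist y (τ (min s t))) '' univ) :=
    fun y t => by rw [hrange, infDist_eq_iInf, iInf_range' (dist y), image_univ, sInf_range]
  simp only [hinf]
  exact isCompact_univ.continuous_sInf (f := fun (p : Y × α) s => dist p.1 (τ (min s p.2)))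
    (by fun_prop)

lemma mem_image_Iic_iff_of_ordConnected {α Y : Type*} [LinearOrder α] {τ : α → Y} {s t : α}
    (hfib : (τ ⁻¹' {τ t}).OrdConnected) (hst : s ≤ t) : τ t ∈ τ '' Iic s ↔ τ s = τ t := by
  refine ⟨?_, fun h => ⟨s, self_mem_Iic, h⟩⟩
  rintro ⟨r, hrs, hr⟩
  exact hfib.out hr rfl ⟨hrs, hst⟩

lemma image_Iic_eq_of_ordConnected {α Y : Type*} [LinearOrder α] {τ : α → Y} {s t : α}
    (hfib : (τ ⁻¹' {τ t}).OrdConnected) (hst : s ≤ t) (h : τ s = τ t) :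
    τ '' Iic s = τ '' Iic t := by
  refine (image_mono (Iic_subset_Iic.2 hst)).antisymm ?_
  rintro _ ⟨r, hrt, rfl⟩
  rcases le_total r s with hrs | hsr
  · exact mem_image_of_mem τ hrs
  · exact ⟨s, self_mem_Iic, h.trans (hfib.out h rfl ⟨hsr, hrt⟩).symm⟩

/-- The witness integrates, over `u`, how far the path stays away from `τ u` up to time `t`. -/
lemma exists_monotone_eq_iff_eq {Y : Type*} [MetricSpace Y] {τ : I → Y} (hτ : Continuous τ)
    (hfib : ∀ y, (τ ⁻¹' {y}).OrdConnected) :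
    ∃ h : I → ℝ, Continuous h ∧ Monotone h ∧ ∀ s t, h s = h t ↔ τ s = τ t := by
  let ψ : ℝ → Y := τ ∘ projIcc 0 1 zero_le_one
  have hψ : Continuous ψ := hτ.comp continuous_projIcc
  let D : I → ℝ → ℝ := fun t u => infDist (ψ u) (τ '' Iic t)
  have hD : Continuous D.uncurry := (continuous_infDist_image_Iic hτ).comp
    (g := fun p : Y × I => infDist p.1 (τ '' Iic p.2)) (f := fun p : I × ℝ => (ψ p.2, p.1))
    ((hψ.comp continuous_snd).prodMk continuous_fst)
  have hDt : ∀ t, Continuous (D t) := fun t => hD.uncurry_left t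
  have hanti : ∀ {s t}, s ≤ t → ∀ u, D t u ≤ D s u := fun hst u =>
    infDist_le_infDist_of_subset (image_mono (Iic_subset_Iic.2 hst)) (nonempty_Iic.image _)
  let h : I → ℝ := fun t => -∫ u in (0 : ℝ)..1, D t u
  have hmono : Monotone h := fun s t hst => neg_le_neg <|
    intervalIntegral.integral_mono zero_le_one ((hDt t).intervalIntegrable 0 1)
      ((hDt s).intervalIntegrable 0 1) (hanti hst)
  have hlt : ∀ {s t}, s ≤ t → τ s ≠ τ t → h s < h t := fun {s t} hst hne => by
    have hψt : ψ t = τ t := congrArg τ (projIcc_val _ t)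
    have hpos : 0 < D s t := ((isClosed_Iic.isCompact.image hτ).isClosed.notMem_iff_infDist_pos
      (nonempty_Iic.image _)).1 (by rwa [hψt, mem_image_Iic_iff_of_ordConnected (hfib _) hst])
    have hzero : D t t = 0 := infDist_zero_of_mem ⟨t, self_mem_Iic, hψt.symm⟩
    exact neg_lt_neg (intervalIntegral.integral_lt_integral_of_continuousOn_of_le_of_exists_lt
      zero_lt_one (hDt t).continuousOn (hDt s).continuousOn (fun u _ => hanti hst u)
      ⟨t, t.2, hzero.trans_lt hpos⟩)
  have hiff : ∀ {s t}, s ≤ t → (h s = h t ↔ τ s = τ t) := fun {s t} hst =>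
    ⟨fun heq => by_contra fun hne => (hlt hst hne).ne heq, fun heq => by
      simp only [h, D, image_Iic_eq_of_ordConnected (hfib _) hst heq]⟩
  refine ⟨h, (intervalIntegral.continuous_parametric_intervalIntegral_of_continuous' hD 0 1).neg,
    hmono, fun s t => ?_⟩
  rcases le_total s t with hst | hst
  · exact hiff hst
  · rw [eq_comm, hiff hst, eq_comm]

theorem exists_continuous_injective_of_continuous {Y : Type*} [MetricSpace Y] {γ : I → Y}
    (hγ : Continuous γ) (hne : γ 0 ≠ γ 1) :
    ∃ β : I → Y, Continuous β ∧ Function.Injective β ∧ β 0 = γ 0 ∧ β 1 = γ 1 := by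
  obtain ⟨τ, hτ, hτ₀, hτ₁, hfib⟩ := exists_continuous_ordConnected_fibers hγ
  obtain ⟨h, hcont, hmono, hiff⟩ := exists_monotone_eq_iff_eq hτ hfib
  change τ 0 = γ 0 at hτ₀
  change τ 1 = γ 1 at hτ₁
  have hlt : h 0 < h 1 := (hmono zero_le_one).lt_of_ne fun heq =>
    hne (by rw [← hτ₀, ← hτ₁, (hiff 0 1).1 heq])
  let q : I → I := fun t => iccHomeoI (h 0) (h 1) hlt ⟨h t, hmono t.2.1, hmono t.2.2⟩
  have hq : Continuous q := (Homeomorph.continuous _).comp (hcont.subtype_mk _)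
  have hqiff : ∀ s t, q s = q t ↔ τ s = τ t := fun s t =>
    ((iccHomeoI _ _ hlt).injective.eq_iff.trans Subtype.ext_iff).trans (hiff s t)
  have hq₀ : q 0 = 0 := Subtype.ext (by simp [q])
  have hq₁ : q 1 = 1 := Subtype.ext (by simp [q, (sub_pos.2 hlt).ne'])
  have hsurj : Function.Surjective q := fun y => by
    obtain ⟨t, ht⟩ := mem_range_of_exists_le_of_exists_ge hq
      ⟨0, hq₀.trans_le (unitInterval.nonneg' (t := y))⟩
      ⟨1, (unitInterval.le_one' (t := y)).trans_eq hq₁.symm⟩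
    exact ⟨t, ht⟩
  have hquot : IsQuotientMap (⟨q, hq⟩ : C(I, I)) := hq.isClosedMap.isQuotientMap hq hsurj
  have hfactors : Function.FactorsThrough (⟨τ, hτ⟩ : C(I, Y)) q := fun s t => (hqiff s t).1
  let β : C(I, Y) := hquot.lift ⟨τ, hτ⟩ hfactors
  have hβ : ∀ t, β (q t) = τ t := DFunLike.congr_fun (hquot.lift_comp _ hfactors)
  refine ⟨β, β.continuous, ?_, ?_, ?_⟩
  · intro x y
    obtain ⟨s, rfl⟩ := hsurj x
    obtain ⟨t, rfl⟩ := hsurj y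
    rw [hβ, hβ]
    exact (hqiff s t).2
  · rw [← hτ₀, ← hβ, hq₀]
  · rw [← hτ₁, ← hβ, hq₁]

/-! ### Jumps of the multivalued logarithm -/

/-- The graph of the multivalued logarithm of `f`, that is, the pullback along `f` of the covering
map `Complex.exp`. -/
def logGraph {X : Type*} (f : X → ℂ) : Set (X × ℂ) := {p | Complex.exp p.2 = f p.1}

section LogGraph

variable {X : Type*} [TopologicalSpace X] {f : X → ℂ}

lemma exists_joinedIn_logGraph (hf : Continuous f) (hne : ∀ x, f x ≠ 0) {x y : X}
    (hxy : Joined x y) {w : ℂ} (hw : Complex.exp w = f x) :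
    ∃ w', JoinedIn (logGraph f) (x, w) (y, w') := by
  obtain ⟨γ⟩ := hxy
  obtain ⟨Γ, hΓ, hΓ₀⟩ := Complex.isCoveringMap_exp.exists_path_lifts
    ⟨fun t => ⟨f (γ t), hne _⟩, (hf.comp γ.continuous).subtype_mk _⟩ w
    (Subtype.ext (by simp [hw]))
  refine ⟨Γ 1, ⟨⟨⟨fun t => (γ t, Γ t), by fun_prop⟩, by simp [hΓ₀], by simp⟩, fun t => ?_⟩⟩
  exact congrArg Subtype.val (congrFun hΓ t)

lemma eventually_joinedIn_logGraph [LocallyPathConnectedSpace X] (hf : Continuous f)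
    (hne : ∀ x, f x ≠ 0) (x : X) {w : ℂ} (hw : Complex.exp w = f x) :
    ∀ᶠ y in 𝓝 x, JoinedIn (logGraph f) (x, w) (y, w + Complex.log (f y / f x)) := by
  have hslit : {y | f y / f x ∈ Complex.slitPlane} ∈ 𝓝 x :=
    (hf.div_const (f x)).continuousAt.preimage_mem_nhds
      (Complex.isOpen_slitPlane.mem_nhds (by simp [div_self (hne x)]))
  filter_upwards [pathComponentIn_mem_nhds hslit] with y hy
  have hcont : ContinuousOn (fun y => (y, w + Complex.log (f y / f x)))
      {y | f y / f x ∈ Complex.slitPlane} :=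
    continuousOn_id.prodMk (continuousOn_const.add
      ((hf.div_const (f x)).continuousOn.clog fun _ => id))
  have himage := JoinedIn.map_continuousOn hy hcont
  simp only [div_self (hne x), Complex.log_one, add_zero] at himage
  refine himage.mono ?_
  rintro _ ⟨z, -, rfl⟩
  simp [logGraph, Complex.exp_add, hw, Complex.exp_log (div_ne_zero (hne z) (hne x)),
    mul_div_cancel₀ _ (hne x)]

/-- A logarithm is obtained by continuation along paths from one base point in each path
component. -/
lemma hasContinuousLog_of_joinedIn_logGraph [LocallyPathConnectedSpace X] (hf : Continuous f)
    (hne : ∀ x, f x ≠ 0)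
    (huniq : ∀ x w w', JoinedIn (logGraph f) (x, w) (x, w') → w = w') : HasContinuousLog f := by
  let base : X → X := fun x => Quotient.out (⟦x⟧ : ZerothHomotopy X)
  have hbase : ∀ x, Joined (base x) x := fun x =>
    Quotient.exact (s := pathSetoid X) (Quotient.out_eq _)
  choose L hL using fun x => exists_joinedIn_logGraph hf hne (hbase x)
    (Complex.exp_log (hne (base x)))
  refine ⟨L, continuous_iff_continuousAt.2 fun x => ?_, fun x => (hL x).target_mem⟩
  have hlog : ContinuousAt (fun y => L x + Complex.log (f y / f x)) x :=
    continuousAt_const.add ((hf.div_const _).continuousAt.clog (by simp [div_self (hne x)]))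
  refine hlog.congr ?_
  filter_upwards [eventually_joinedIn_logGraph hf hne x (hL x).target_mem] with y hy
  have hyx : base y = base x := congrArg Quotient.out (Quotient.sound (s := pathSetoid X)
    (hy.joined.map continuous_fst).symm)
  have hLy := hL y
  rw [hyx] at hLy
  exact huniq y _ _ (hy.symm.trans ((hL x).symm.trans hLy))

end LogGraph

/-! ### Simple closed curves -/

lemma nonempty_circle_homeomorph_sphere :
    Nonempty (Circle ≃ₜ sphere (0 : EuclideanSpace ℝ (Fin 2)) 1) :=
  let e := Complex.orthonormalBasisOneI.repr
  ⟨(Homeomorph.setCongr (by ext; simp [Submonoid.unitSphere])).trans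
    ((e.toHomeomorph.image (sphere 0 1)).trans
      (Homeomorph.setCongr ((e.image_sphere 0 1).trans (by rw [map_zero]))))⟩

section IsSimpleClosedCurve

variable {α β : Type*} [TopologicalSpace α] [TopologicalSpace β] {S : Set α} {T : Set β}

lemma IsSimpleClosedCurve.of_homeomorph (hS : IsSimpleClosedCurve S) (e : S ≃ₜ T) :
    IsSimpleClosedCurve T :=
  hS.map e.symm.trans

lemma IsSimpleClosedCurve.isCompact (hS : IsSimpleClosedCurve S) : IsCompact S := by
  obtain ⟨e⟩ := hS
  exact isCompact_iff_compactSpace.2 e.symm.compactSpace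

end IsSimpleClosedCurve

lemma isSimpleClosedCurve_image_Icc {X : Type*} [TopologicalSpace X] [T2Space X] {p : ℝ → X}
    {s t : ℝ} (hst : s < t) (hp : ContinuousOn p (Icc s t)) (hclosed : p s = p t)
    (hinj : InjOn p (Ico s t)) : IsSimpleClosedCurve (p '' Icc s t) := by
  obtain ⟨T, rfl⟩ : ∃ T, t = s + T := ⟨t - s, by ring⟩
  have hT : Fact (0 < T) := ⟨by simpa using hst⟩
  let F : AddCircle T → X := AddCircle.liftIco T s p
  have hF : Continuous F := AddCircle.liftIco_continuous hclosed hp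
  have hFinj : Function.Injective F := hinj.injective.comp (AddCircle.equivIco T s).injective
  have hrange : range F = p '' Icc s (s + T) := by
    have hIco : range F = p '' Ico s (s + T) :=
      ((AddCircle.equivIco T s).surjective.range_comp _).trans (range_domRestrict p _)
    rw [hIco, ← Ico_union_right hst.le, image_union, image_singleton, ← hclosed, union_singleton,
      insert_eq_of_mem (mem_image_of_mem p (left_mem_Ico.2 hst))]
  obtain ⟨e⟩ := nonempty_circle_homeomorph_sphere
  rw [← hrange]
  exact ⟨(hF.isClosedEmbedding hFinj).isEmbedding.toHomeomorph.symm.trans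
    ((AddCircle.homeomorphCircle hT.out.ne').trans e)⟩

lemma exists_lt_eq_injOn_Ico {X : Type*} [TopologicalSpace X] [T2Space X] {p : I → X}
    (hp : Continuous p) (hinj : IsLocallyInjective p) (hclosed : p 0 = p 1) :
    ∃ s t, s < t ∧ p s = p t ∧ InjOn p (Ico s t) := by
  let Q : Set (I × I) := {z | z.1 < z.2 ∧ p z.1 = p z.2}
  have hQ : IsClosed Q := by
    refine isClosed_of_closure_subset fun z hz => ?_
    have hle : IsClosed {z : I × I | z.1 ≤ z.2 ∧ p z.1 = p z.2} :=
      (isClosed_le continuous_fst continuous_snd).inter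
        (isClosed_eq (hp.comp continuous_fst) (hp.comp continuous_snd))
    obtain ⟨hzle, hzeq⟩ := hle.closure_subset_iff.2 (fun z hz => ⟨hz.1.le, hz.2⟩) hz
    refine ⟨hzle.lt_of_ne fun hdiag => ?_, hzeq⟩
    obtain ⟨U, hU, hzU, hUinj⟩ := hinj z.1
    obtain ⟨⟨u, v⟩, ⟨huU, hvU⟩, huv, heq⟩ :=
      mem_closure_iff.1 hz (U ×ˢ U) (hU.prod hU) ⟨hzU, hdiag ▸ hzU⟩
    exact huv.ne (hUinj huU hvU heq)
  obtain ⟨⟨s, t⟩, ⟨hst, heq⟩, hmin⟩ := hQ.isCompact.exists_isMinOn ⟨(0, 1), zero_lt_one, hclosed⟩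
    (f := fun z => (z.2 : ℝ) - z.1) (by fun_prop)
  have hne : ∀ {u v : I}, u ∈ Ico s t → v ∈ Ico s t → u < v → p u ≠ p v := by
    intro u v hu hv huv h
    have hge : (t : ℝ) - s ≤ v - u := hmin (show (u, v) ∈ Q from ⟨huv, h⟩)
    have hsu : (s : ℝ) ≤ u := hu.1
    have hvt : (v : ℝ) < t := hv.2
    linarith
  refine ⟨s, t, hst, heq, fun u hu v hv h => ?_⟩
  rcases lt_trichotomy u v with huv | huv | huv
  · exact absurd h (hne hu hv huv)
  · exact huv
  · exact absurd h.symm (hne hv hu huv)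

lemma isLocallyInjective_fst_logGraph {X : Type*} [TopologicalSpace X] (f : X → ℂ) :
    IsLocallyInjective fun q : logGraph f => q.1.1 := by
  rw [isLocallyInjective_iff_nhds]
  rintro ⟨⟨x, w⟩, hw⟩
  refine ⟨{q | dist q.1.2 w < 1 / 2}, (isOpen_lt (by fun_prop) (by fun_prop)).mem_nhds
    (by simp), ?_⟩
  rintro ⟨⟨y, u⟩, hu⟩ hyu ⟨⟨_, v⟩, hv⟩ hyv rfl
  by_contra hne
  have hge : 1 ≤ ‖u - v‖ :=
    one_le_norm_sub_of_exp_eq_exp (Eq.trans hu (Eq.symm hv)) (by simpa using hne)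
  have hlt : dist u v < 1 / 2 + 1 / 2 := (dist_triangle_right u v w).trans_lt (add_lt_add hyu hyv)
  rw [dist_eq_norm] at hlt
  linarith

lemma exists_not_hasContinuousLog_of_injective_path {X : Type*} [TopologicalSpace X]
    [T2Space X] {f : X → ℂ} {β : I → logGraph f} (hβ : Continuous β) (hinj : Function.Injective β)
    (hclosed : (β 0).1.1 = (β 1).1.1) :
    ∃ S : Set X, IsSimpleClosedCurve S ∧ ¬ HasContinuousLog fun x : S => f x := by
  let p : I → X := fun t => (β t).1.1
  have hp : Continuous p := by fun_prop
  obtain ⟨s, t, hst, heq, hpinj⟩ := exists_lt_eq_injOn_Ico hp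
    ((isLocallyInjective_fst_logGraph f).comp_right hβ hinj) hclosed
  refine ⟨p '' Icc s t, ?_, ?_⟩
  · have hext : IccExtend zero_le_one p ∘ Subtype.val = p := funext (IccExtend_val _ p)
    have hcurve := isSimpleClosedCurve_image_Icc hst hp.Icc_extend'.continuousOn
      (by simpa using heq) (by
        rw [← image_subtype_val_Ico]
        exact InjOn.image_of_comp (hext.symm ▸ hpinj))
    rwa [← image_subtype_val_Icc, ← image_comp, hext] at hcurve
  · rintro ⟨L, hL, hLexp⟩
    have := isPreconnected_iff_preconnectedSpace.1 (isPreconnected_Icc (a := s) (b := t))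
    have hjump := sub_eq_sub_of_exp_eq_exp (K := Icc s t)
      (u := fun r => L ⟨p r, mem_image_of_mem p r.2⟩) (v := fun r => (β r).1.2)
      (hL.comp (by fun_prop)) (by fun_prop) (fun r => (hLexp _).trans (β r).2.symm)
      ⟨s, left_mem_Icc.2 hst.le⟩ ⟨t, right_mem_Icc.2 hst.le⟩
    simp only [heq, sub_right_inj] at hjump
    exact hst.ne (hinj (Subtype.ext (Prod.ext heq hjump)))

theorem exists_isSimpleClosedCurve_not_hasContinuousLog {X : Type*} [TopologicalSpace X]
    [MetrizableSpace X] [LocallyPathConnectedSpace X] {f : X → ℂ} (hf : Continuous f)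
    (hne : ∀ x, f x ≠ 0) (hlog : ¬ HasContinuousLog f) :
    ∃ S : Set X, IsSimpleClosedCurve S ∧ ¬ HasContinuousLog fun x : S => f x := by
  let _ : MetricSpace X := TopologicalSpace.metrizableSpaceMetric X
  obtain ⟨x, w, w', hjump, hww'⟩ :
      ∃ x w w', JoinedIn (logGraph f) (x, w) (x, w') ∧ w ≠ w' := by
    contrapose! hlog
    exact hasContinuousLog_of_joinedIn_logGraph hf hne hlog
  let γ := hjump.joined_subtype.somePath
  have hγ : γ 0 ≠ γ 1 := by simpa using hww'
  obtain ⟨β, hβ, hinj, hβ₀, hβ₁⟩ := exists_continuous_injective_of_continuous γ.continuous hγ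
  exact exists_not_hasContinuousLog_of_injective_path hβ hinj (by simp [hβ₀, hβ₁])

theorem stmt_8_general {E : Type*} [TopologicalSpace E] (e : E ≃ₜ ℂ) {X : Set E}
    (hcomp : IsCompact X) (hlc : LocallyConnectedSpace X) {a b : E} (ha : a ∈ Xᶜ) (hb : b ∈ Xᶜ)
    (hsep : connectedComponentIn Xᶜ a ≠ connectedComponentIn Xᶜ b) :
    ∃ S : Set E, S ⊆ X ∧ IsSimpleClosedCurve S ∧
      connectedComponentIn Sᶜ a ≠ connectedComponentIn Sᶜ b := by
  have : CompactSpace X := isCompact_iff_compactSpace.1 hcomp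
  have : MetrizableSpace X := (e.isEmbedding.comp .subtypeVal).metrizableSpace
  have : LocallyPathConnectedSpace X := locallyPathConnectedSpace_of_compactSpace X
  have hne : ∀ {c : E}, c ∈ Xᶜ → ∀ x : X, e x - e c ≠ 0 := fun hc x =>
    sub_ne_zero.2 (e.injective.ne (ne_of_mem_of_not_mem x.2 hc))
  obtain ⟨S, hS, hlogS⟩ := exists_isSimpleClosedCurve_not_hasContinuousLog
    (f := fun x : X => (e x - e a) / (e x - e b))
    (Continuous.div (by fun_prop) (by fun_prop) (hne hb))
    (fun x => div_ne_zero (hne ha x) (hne hb x))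
    (mt (hasContinuousLog_iff_connectedComponentIn_eq_of_homeomorph e hcomp ha hb).1 hsep)
  have hSX : (↑) '' S ⊆ X := Subtype.coe_image_subset X S
  let ι : S ≃ₜ ((↑) '' S : Set E) := Topology.IsEmbedding.subtypeVal.homeomorphImage S
  refine ⟨(↑) '' S, hSX, hS.of_homeomorph ι, fun h => hlogS ?_⟩
  exact ((hasContinuousLog_iff_connectedComponentIn_eq_of_homeomorph e
    (hS.isCompact.image continuous_subtype_val) (notMem_subset hSX ha)
    (notMem_subset hSX hb)).2 h).comp ι.continuous

/-- If a locally connected plane continuum separates the plane between two points, then it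
contains a simple closed curve separating the plane between those points. -/
theorem stmt_8 (X : Set (EuclideanSpace ℝ (Fin 2)))
    (hcomp : IsCompact X) (hconn : IsConnected X)
    (hlc : LocallyConnectedSpace ↥X)
    (a b : EuclideanSpace ℝ (Fin 2)) (ha : a ∈ Xᶜ) (hb : b ∈ Xᶜ)
    (hsep : connectedComponentIn Xᶜ a ≠ connectedComponentIn Xᶜ b) :
    ∃ S : Set (EuclideanSpace ℝ (Fin 2)), S ⊆ X ∧ IsSimpleClosedCurve S ∧
      connectedComponentIn Sᶜ a ≠ connectedComponentIn Sᶜ b :=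
  stmt_8_general Complex.orthonormalBasisOneI.repr.symm.toHomeomorph hcomp hlc ha hb hsep
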